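/- Let R = 𝔽_2[x]/(x^51 − 1), f_1 = x^25 + x^23 + x^22 + x^21 + x^20 + x^18 + x^16 + x^11 + x^10 + x^8 + x^7 + x^6 + x^5 + x^4 + x + 1, f_2 = (x^51 − 1)/(x^2 + x + 1), and g = x^20 + x^15 + x^14 + x^10 + x^9 + x^7 + 1, all regarded in R. Let C = {(c_1, c_1·g + c_2) : c_1 ∈ (f_1), c_2 ∈ (f_2)} ⊆ R^2, where (f_i) denotes the ideal of R generated by f_i. Then, under the coefficient identification R^2 ≅ 𝔽_2^{102}, C is an 𝔽_2-linear code of length 102 and dimension 28 in which every nonzero codeword has Hamming weight at least 28. -/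

import Mathlib

open Polynomial

/-- `R = F[x]/(x^m - 1)` -/
abbrev Rng (F : Type*) [Field F] (m : ℕ) : Type _ := AdjoinRoot (X ^ m - 1 : F[X])

theorem monicXm {F : Type*} [Field F] {m : ℕ} (hm : m ≠ 0) :
    (X ^ m - 1 : F[X]).Monic := by
  simpa using Polynomial.monic_X_pow_sub_C (1 : F) hm

/-- Hamming weight of an element of `R` under the coefficient identification
`R ≅ F^m`: the number of nonzero coefficients of the canonical representative
of degree `< m`. -/
noncomputable def wt {F : Type*} [Field F] {m : ℕ} (hm : m ≠ 0) (r : Rng F m) : ℕ :=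
  (AdjoinRoot.modByMonicHom (monicXm hm) r).support.card

/-- `R`-Hamming weight of a vector over `R`: the number of nonzero coordinates. -/
noncomputable def rwt {R : Type*} [Zero R] {l : ℕ} (v : Fin l → R) : ℕ :=
  Nat.card {j // v j ≠ 0}

noncomputable def f₁ : Rng (ZMod 2) 51 :=
  AdjoinRoot.mk _ (X ^ 25 + X ^ 23 + X ^ 22 + X ^ 21 + X ^ 20 + X ^ 18 + X ^ 16 +
    X ^ 11 + X ^ 10 + X ^ 8 + X ^ 7 + X ^ 6 + X ^ 5 + X ^ 4 + X + 1)

noncomputable def f₂ : Rng (ZMod 2) 51 :=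
  AdjoinRoot.mk _ ((X ^ 51 - 1) /ₘ (X ^ 2 + X + 1))

noncomputable def g : Rng (ZMod 2) 51 :=
  AdjoinRoot.mk _ (X ^ 20 + X ^ 15 + X ^ 14 + X ^ 10 + X ^ 9 + X ^ 7 + 1)

/-
Every word of `(f₁)` has even weight, so if a codeword `(c₁, c₁ g + c₂)` has weight below 28, one of
its halves has weight at most 12. The two halves play symmetric roles: `g` is invertible modulo
`q = f₂ / f₁`, so `c₁` lies in `e g⁻¹ + (f₂)`, where `e` is the second half. It remains to bound the
weight of `(c, c γ + d)` for `c ∈ (f₁)` of weight at most 12, `d ∈ (f₂)` and `γ ∈ {g, g⁻¹}`. By the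
cycle lemma some cyclic shift of `c` has, in each of its initial segments, a proportion of ones at
most `12 / 51`. A word of `(f₁)` is determined by its first 26 coefficients, which leaves few enough
words to enumerate, with four values of `d` for each.
-/

section CycleLemma

variable {p : ℕ → Prop} [DecidablePred p] {m : ℕ}

theorem count_add_of_periodic (hp : Function.Periodic p m) (n : ℕ) :
    Nat.count p (n + m) = Nat.count p n + Nat.count p m := by
  rw [add_comm n, Nat.count_add, add_comm]
  simp only [add_comm m, hp _]

theorem exists_forall_mul_count_le (hm : m ≠ 0) (hp : Function.Periodic p m) :
    ∃ a, ∀ n, m * Nat.count (fun i => p (a + i)) n ≤ n * Nat.count p m := by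
  -- Start just after the point where the count is furthest ahead of its average slope.
  let excess (n : ℕ) : ℤ := m * Nat.count p n - n * Nat.count p m
  have excess_periodic : Function.Periodic excess m := fun n => by
    simp only [excess, count_add_of_periodic hp]
    push_cast
    ring
  obtain ⟨a, -, ha⟩ := (Finset.range m).exists_max_image excess ⟨0, by simpa using hm.bot_lt⟩
  have excess_le (n : ℕ) : excess n ≤ excess a := by
    rw [← excess_periodic.map_mod_nat]
    exact ha _ (Finset.mem_range.2 (Nat.mod_lt n hm.bot_lt))
  refine ⟨a, fun n => ?_⟩
  have h := excess_le (a + n)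
  simp only [excess, Nat.count_add] at h
  push_cast at h
  zify
  linarith

end CycleLemma

section CyclicCoeff

variable {F : Type*} [Field F] {m : ℕ}

/-- The class of `x` in `F[x]/(x^m - 1)`, which acts on coefficient vectors as a cyclic shift. -/
noncomputable abbrev xBar (F : Type*) [Field F] (m : ℕ) : Rng F m := AdjoinRoot.root _

theorem xBar_pow_self : xBar F m ^ m = 1 := by
  have h : AdjoinRoot.mk (X ^ m - 1 : F[X]) (X ^ m - 1) = 0 := AdjoinRoot.mk_self
  rwa [map_sub, map_pow, AdjoinRoot.mk_X, map_one, sub_eq_zero] at h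

theorem xBar_pow_mod (n : ℕ) : xBar F m ^ (n % m) = xBar F m ^ n :=
  (pow_eq_pow_mod n xBar_pow_self).symm

variable [NeZero m]

/-- The coefficient of `x^n` in a residue class modulo `x^m - 1`, with `n` read modulo `m`. -/
noncomputable def cyclicCoeff (n : ℕ) : Rng F m →ₗ[F] F :=
  lcoeff F (n % m) ∘ₗ AdjoinRoot.modByMonicHom (monicXm (NeZero.ne m))

theorem cyclicCoeff_periodic (c : Rng F m) : Function.Periodic (cyclicCoeff · c) m := fun n => by
  simp only [cyclicCoeff, Nat.add_mod_right]

theorem cyclicCoeff_mk {p : F[X]} (hp : p.natDegree < m) (n : ℕ) :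
    cyclicCoeff n (AdjoinRoot.mk (X ^ m - 1) p) = p.coeff (n % m) := by
  have hmod : p %ₘ (X ^ m - 1) = p := by
    refine (modByMonic_eq_self_iff (monicXm (NeZero.ne m))).2 (degree_lt_degree ?_)
    rwa [← C_1, natDegree_X_pow_sub_C]
  rw [cyclicCoeff, LinearMap.comp_apply, AdjoinRoot.modByMonicHom_mk, hmod, lcoeff_apply]

theorem cyclicCoeff_xBar_pow (n i : ℕ) :
    cyclicCoeff n (xBar F m ^ i) = if n % m = i % m then 1 else 0 := by
  have hi : (X ^ (i % m) : F[X]).natDegree < m := by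
    simpa using Nat.mod_lt i (NeZero.pos m)
  rw [← xBar_pow_mod, xBar, ← AdjoinRoot.mk_X, ← map_pow, cyclicCoeff_mk hi, coeff_X_pow]

theorem linearMap_ext_xBar_pow {M : Type*} [AddCommMonoid M] [Module F M]
    {φ ψ : Rng F m →ₗ[F] M} (h : ∀ i, φ (xBar F m ^ i) = ψ (xBar F m ^ i)) : φ = ψ :=
  (AdjoinRoot.powerBasis' (monicXm (NeZero.ne m))).basis.ext fun i => by simpa using h i

theorem cyclicCoeff_xBar_mul (c : Rng F m) (n : ℕ) :
    cyclicCoeff (n + 1) (xBar F m * c) = cyclicCoeff n c := by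
  have h : cyclicCoeff (n + 1) ∘ₗ LinearMap.mulLeft F (xBar F m) = cyclicCoeff n :=
    linearMap_ext_xBar_pow fun i => by
      simp only [LinearMap.comp_apply, LinearMap.mulLeft_apply, ← pow_succ', cyclicCoeff_xBar_pow]
      exact if_congr (Nat.ModEq.add_iff_right rfl) rfl rfl
  exact LinearMap.congr_fun h c

theorem cyclicCoeff_xBar_pow_mul (c : Rng F m) (k n : ℕ) :
    cyclicCoeff (n + k) (xBar F m ^ k * c) = cyclicCoeff n c := by
  induction k with
  | zero => simp
  | succ k ih => rw [pow_succ', mul_assoc, ← add_assoc, cyclicCoeff_xBar_mul, ih]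

theorem natDegree_modByMonicHom_lt (c : Rng F m) :
    (AdjoinRoot.modByMonicHom (monicXm (NeZero.ne m)) c).natDegree < m := by
  obtain ⟨p, rfl⟩ := AdjoinRoot.mk_surjective c
  have hdeg : (X ^ m - 1 : F[X]).natDegree = m := by rw [← C_1, natDegree_X_pow_sub_C]
  have hne : (X ^ m - 1 : F[X]) ≠ 1 := fun h => NeZero.ne m (by simpa [h] using hdeg.symm)
  have h := natDegree_modByMonic_lt p (monicXm (NeZero.ne m)) hne
  rwa [hdeg] at h

theorem cyclicCoeff_ext {c d : Rng F m} (h : ∀ n < m, cyclicCoeff n c = cyclicCoeff n d) :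
    c = d := by
  refine (AdjoinRoot.mk_leftInverse (monicXm (NeZero.ne m))).injective (Polynomial.ext fun n => ?_)
  rcases lt_or_ge n m with hn | hn
  · simpa [cyclicCoeff, Nat.mod_eq_of_lt hn] using h n hn
  · rw [coeff_eq_zero_of_natDegree_lt ((natDegree_modByMonicHom_lt c).trans_le hn),
      coeff_eq_zero_of_natDegree_lt ((natDegree_modByMonicHom_lt d).trans_le hn)]

theorem wt_eq_count [DecidableEq F] (c : Rng F m) :
    wt (NeZero.ne m) c = Nat.count (fun n => cyclicCoeff n c ≠ 0) m := by
  have hsupp : (AdjoinRoot.modByMonicHom (monicXm (NeZero.ne m)) c).support =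
      {n ∈ Finset.range m | cyclicCoeff n c ≠ 0} := by
    ext n
    have hlt (hn : n ∈ (AdjoinRoot.modByMonicHom (monicXm (NeZero.ne m)) c).support) : n < m :=
      (le_natDegree_of_mem_supp n hn).trans_lt (natDegree_modByMonicHom_lt c)
    rw [Finset.mem_filter, Finset.mem_range, ← and_iff_right_of_imp hlt]
    refine and_congr_right fun hn => ?_
    simp [cyclicCoeff, Nat.mod_eq_of_lt hn]
  rw [wt, hsupp, Nat.count_eq_card_filter_range]

theorem wt_xBar_pow_mul (c : Rng F m) (k : ℕ) :
    wt (NeZero.ne m) (xBar F m ^ k * c) = wt (NeZero.ne m) c := by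
  classical
  have hper := count_add_of_periodic (p := fun n => cyclicCoeff n (xBar F m ^ k * c) ≠ 0) (m := m)
    (fun n => by simp only [cyclicCoeff_periodic _ n]) k
  rw [Nat.count_add, add_right_inj] at hper
  simp only [add_comm k, cyclicCoeff_xBar_pow_mul] at hper
  rw [wt_eq_count, wt_eq_count, hper]

theorem exists_ballot_shift [DecidableEq F] (c : Rng F m) : ∃ k, ∀ n,
    m * Nat.count (fun i => cyclicCoeff i (xBar F m ^ k * c) ≠ 0) n ≤ n * wt (NeZero.ne m) c := by
  obtain ⟨a, ha⟩ := exists_forall_mul_count_le (p := fun n => cyclicCoeff n c ≠ 0) (NeZero.ne m)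
    fun n => by simp only [cyclicCoeff_periodic _ n]
  obtain ⟨k, hk⟩ := exists_add_of_le (Nat.le_mul_of_pos_right a (NeZero.pos m))
  have hshift (i : ℕ) : cyclicCoeff i (xBar F m ^ k * c) = cyclicCoeff (a + i) c := by
    rw [← cyclicCoeff_xBar_pow_mul c k, add_right_comm, ← hk, add_comm]
    exact ((cyclicCoeff_periodic _).nat_mul a i).symm
  exact ⟨k, by simpa only [hshift, wt_eq_count] using ha⟩

end CyclicCoeff

section PrincipalIdeal

variable {F : Type*} [Field F] {f h q : F[X]}

theorem mk_mul_eq_zero_iff_dvd (hq : q = f * h) (hf : f ≠ 0) (u : F[X]) :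
    AdjoinRoot.mk q (u * f) = 0 ↔ h ∣ u := by
  rw [AdjoinRoot.mk_eq_zero, hq, mul_comm u, mul_dvd_mul_iff_left hf]

theorem exists_mk_mul_eq_of_mem_span (hq : q = f * h) (hh : h ≠ 0) {c : AdjoinRoot q}
    (hc : c ∈ Ideal.span {AdjoinRoot.mk q f}) :
    ∃ u : F[X], u.degree < h.degree ∧ AdjoinRoot.mk q (u * f) = c := by
  obtain ⟨d, rfl⟩ := Ideal.mem_span_singleton'.1 hc
  obtain ⟨u, rfl⟩ := AdjoinRoot.mk_surjective d
  refine ⟨u % h, EuclideanDomain.mod_lt u hh, ?_⟩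
  rw [← map_mul, AdjoinRoot.mk_eq_mk, hq]
  exact ⟨-(u / h), by linear_combination f * EuclideanDomain.div_add_mod u h⟩

theorem finrank_span_mk (hq : q = f * h) (hf : f ≠ 0) :
    Module.finrank F (Ideal.span {AdjoinRoot.mk q f}) = h.natDegree := by
  let φ : F[X] →ₗ[F] AdjoinRoot q :=
    LinearMap.mulRight F (AdjoinRoot.mk q f) ∘ₗ (AdjoinRoot.mkₐ q).toLinearMap
  have hφ (u : F[X]) : φ u = AdjoinRoot.mk q (u * f) := (map_mul (AdjoinRoot.mk q) u f).symm
  have hker : LinearMap.ker φ = (Ideal.span {h}).restrictScalars F := by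
    ext u
    rw [LinearMap.mem_ker, hφ, mk_mul_eq_zero_iff_dvd hq hf, Submodule.restrictScalars_mem,
      Ideal.mem_span_singleton]
  have hrange : LinearMap.range φ = (Ideal.span {AdjoinRoot.mk q f}).restrictScalars F := by
    ext c
    rw [LinearMap.mem_range, Submodule.restrictScalars_mem, Ideal.mem_span_singleton']
    exact AdjoinRoot.mk_surjective.exists (p := fun d => d * AdjoinRoot.mk q f = c) |>.symm
  calc Module.finrank F (Ideal.span {AdjoinRoot.mk q f})
      = Module.finrank F (LinearMap.range φ) := by rw [hrange]; rfl
    _ = Module.finrank F (F[X] ⧸ (Ideal.span {h}).restrictScalars F) := by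
      rw [← hker, φ.quotKerEquivRange.finrank_eq]
    _ = Module.finrank F (F[X] ⧸ Ideal.span {h}) :=
      (Submodule.Quotient.restrictScalarsEquiv F (Ideal.span {h})).finrank_eq
    _ = h.natDegree := finrank_quotient_span_eq_natDegree

end PrincipalIdeal

theorem eq_zero_of_mul_mk_eq_zero {F : Type*} [Field F] {m : ℕ} [NeZero m] {h : F[X]} (hh : h ≠ 0)
    (hm : h.natDegree ≤ m) {c : Rng F m} (hc : c * AdjoinRoot.mk _ h = 0)
    (hlow : ∀ n < h.natDegree, cyclicCoeff n c = 0) : c = 0 := by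
  -- Multiplying by `x^j` moves the vanishing coefficients of `c` to the top.
  obtain ⟨j, hj⟩ := exists_add_of_le hm
  let p := AdjoinRoot.modByMonicHom (monicXm (NeZero.ne m)) (xBar F m ^ j * c)
  have hp : AdjoinRoot.mk _ p = xBar F m ^ j * c := AdjoinRoot.mk_leftInverse _ _
  have hcoeff : p.leadingCoeff = cyclicCoeff p.natDegree (xBar F m ^ j * c) := by
    rw [← hp, cyclicCoeff_mk (natDegree_modByMonicHom_lt _),
      Nat.mod_eq_of_lt (natDegree_modByMonicHom_lt _), leadingCoeff]
  have hdeg (hp0 : p ≠ 0) : p.natDegree < j := by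
    by_contra! hle
    obtain ⟨n, hn⟩ := exists_add_of_le hle
    have hlt : p.natDegree < m := natDegree_modByMonicHom_lt _
    rw [hn, add_comm, cyclicCoeff_xBar_pow_mul, hlow n (by lia), leadingCoeff_eq_zero] at hcoeff
    exact hp0 hcoeff
  have hdvd : X ^ m - 1 ∣ p * h := by
    rw [← AdjoinRoot.mk_eq_zero, map_mul, hp, mul_assoc, hc, mul_zero]
  have hp0 : p = 0 := by
    by_contra hp0
    refine mul_ne_zero hp0 hh (eq_zero_of_dvd_of_natDegree_lt hdvd ?_)
    rw [natDegree_mul hp0 hh, ← C_1, natDegree_X_pow_sub_C, hj]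
    have := hdeg hp0
    lia
  calc c = xBar F m ^ (h.natDegree + j) * c := by rw [← hj, xBar_pow_self, one_mul]
    _ = xBar F m ^ h.natDegree * AdjoinRoot.mk _ p := by rw [pow_add, mul_assoc, hp]
    _ = 0 := by rw [hp0, map_zero, mul_zero]

section XPowSum

/-- The polynomial over `𝔽₂` given by a list of exponents. -/
noncomputable def xPowSum (es : List ℕ) : (ZMod 2)[X] := (es.map (X ^ ·)).sum

theorem degree_xPowSum_lt {es : List ℕ} {n : ℕ} (h : ∀ e ∈ es, e < n) :
    (xPowSum es).degree < n :=
  mem_degreeLT.1 <| list_sum_mem fun p hp => by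
    obtain ⟨e, he, rfl⟩ := List.mem_map.1 hp
    exact mem_degreeLT.2 ((degree_X_pow_le e).trans_lt (Nat.cast_lt.2 (h e he)))

theorem monic_xPowSum_cons {n : ℕ} {es : List ℕ} (h : ∀ e ∈ es, e < n) :
    (xPowSum (n :: es)).Monic :=
  monic_X_pow_add (degree_xPowSum_lt h)

theorem natDegree_xPowSum_cons {n : ℕ} {es : List ℕ} (h : ∀ e ∈ es, e < n) :
    (xPowSum (n :: es)).natDegree = n :=
  natDegree_eq_of_degree_eq_some <|
    (degree_add_eq_left_of_degree_lt ((degree_xPowSum_lt h).trans_eq (degree_X_pow n).symm)).trans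
      (degree_X_pow n)

end XPowSum

section Bits

variable {m : ℕ} [NeZero m]

/-- The coefficient vector of an element of `𝔽₂[x]/(x^m - 1)`, with the coefficient of `x^n` as
bit `n` counted from the least significant one. -/
noncomputable def bits (c : Rng (ZMod 2) m) : BitVec m :=
  BitVec.ofFnLE fun i => decide (cyclicCoeff i c ≠ 0)

theorem getLsbD_bits (c : Rng (ZMod 2) m) {n : ℕ} (hn : n < m) :
    (bits c).getLsbD n = decide (cyclicCoeff n c ≠ 0) := by
  rw [bits, BitVec.getLsbD_ofFnLE, dif_pos hn]

theorem bits_zero : bits (0 : Rng (ZMod 2) m) = 0 :=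
  BitVec.eq_of_getLsbD_eq fun n hn => by simp [getLsbD_bits _ hn]

theorem bits_one : bits (1 : Rng (ZMod 2) m) = BitVec.ofNat m 1 :=
  BitVec.eq_of_getLsbD_eq fun n hn => by
    rw [getLsbD_bits _ hn, ← pow_zero (xBar (ZMod 2) m), cyclicCoeff_xBar_pow, BitVec.getLsbD_one,
      Nat.mod_eq_of_lt hn, Nat.zero_mod]
    simp [NeZero.pos m]

theorem bits_add (c d : Rng (ZMod 2) m) : bits (c + d) = bits c ^^^ bits d :=
  BitVec.eq_of_getLsbD_eq fun n hn => by
    simp only [BitVec.getLsbD_xor, getLsbD_bits _ hn, map_add]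
    generalize cyclicCoeff n c = a
    generalize cyclicCoeff n d = b
    decide +revert

theorem bits_eq_zero_iff {c : Rng (ZMod 2) m} : bits c = 0 ↔ c = 0 := by
  refine ⟨fun h => cyclicCoeff_ext fun n hn => ?_, fun h => h ▸ bits_zero⟩
  simpa [getLsbD_bits _ hn] using congrArg (BitVec.getLsbD · n) h

theorem getLsbD_bits_eq_iff {c d : Rng (ZMod 2) m} {n : ℕ} (hn : n < m) :
    (bits c).getLsbD n = (bits d).getLsbD n ↔ cyclicCoeff n c = cyclicCoeff n d := by
  rw [getLsbD_bits _ hn, getLsbD_bits _ hn]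
  generalize cyclicCoeff n c = a
  generalize cyclicCoeff n d = b
  decide +revert

theorem bits_xBar_pow_mul (k : ℕ) (c : Rng (ZMod 2) m) :
    bits (xBar (ZMod 2) m ^ k * c) = (bits c).rotateLeft k :=
  BitVec.eq_of_getLsbD_eq fun n hn => by
    have hk : k % m < m := Nat.mod_lt k (NeZero.pos m)
    rw [getLsbD_bits _ hn, BitVec.getLsbD_rotateLeft, ← xBar_pow_mod]
    rcases lt_or_ge n (k % m) with h | h
    · rw [decide_eq_true h, cond_true, getLsbD_bits _ (by lia),
        ← cyclicCoeff_xBar_pow_mul c (k % m), show m - k % m + n + k % m = n + m by lia]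
      exact congrArg (decide <| · ≠ 0) (cyclicCoeff_periodic _ n).symm
    · rw [decide_eq_false h.not_gt, cond_false, decide_eq_true hn, Bool.true_and,
        getLsbD_bits _ (by lia), ← cyclicCoeff_xBar_pow_mul c (k % m), Nat.sub_add_cancel h]

/-- The action on bit vectors of multiplication by `xPowSum es`. -/
def xorRotations (es : List ℕ) (w : BitVec m) : BitVec m :=
  es.foldr (fun e y => (w.rotateLeft e).xor y) 0

theorem bits_mk_xPowSum_mul (es : List ℕ) (c : Rng (ZMod 2) m) :
    bits (AdjoinRoot.mk _ (xPowSum es) * c) = xorRotations es (bits c) := by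
  induction es with
  | nil => simp [xPowSum, xorRotations, bits_zero]
  | cons e es ih =>
    have hcons : AdjoinRoot.mk _ (xPowSum (e :: es)) * c =
        xBar (ZMod 2) m ^ e * c + AdjoinRoot.mk _ (xPowSum es) * c := by
      simp only [xPowSum, List.map_cons, List.sum_cons, map_add, map_pow, AdjoinRoot.mk_X, add_mul]
    rw [hcons, bits_add, bits_xBar_pow_mul, ih]
    rfl

/-- Evaluation at `x = 1`, that is, the parity of the Hamming weight. -/
noncomputable def augmentation : Rng (ZMod 2) m →+* ZMod 2 :=
  AdjoinRoot.lift (RingHom.id (ZMod 2)) 1 (by simp)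

theorem augmentation_eq_wt (c : Rng (ZMod 2) m) :
    augmentation c = (wt (NeZero.ne m) c : ZMod 2) := by
  have eq_one (a : ZMod 2) (ha : a ≠ 0) : a = 1 := by decide +revert
  let p := AdjoinRoot.modByMonicHom (monicXm (NeZero.ne m)) c
  calc augmentation c = augmentation (AdjoinRoot.mk _ p) := by rw [AdjoinRoot.mk_leftInverse]
    _ = ∑ i ∈ p.support, p.coeff i := by
      simp [augmentation, AdjoinRoot.lift_mk, eval₂_eq_sum, sum_def]
    _ = ∑ i ∈ p.support, 1 := Finset.sum_congr rfl fun i hi => eq_one _ (mem_support_iff.1 hi)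
    _ = (wt (NeZero.ne m) c : ZMod 2) := by rw [Finset.sum_const, nsmul_one]; rfl

theorem even_wt_of_mem_span {f c : Rng (ZMod 2) m} (hf : Even (wt (NeZero.ne m) f))
    (hc : c ∈ Ideal.span {f}) : Even (wt (NeZero.ne m) c) := by
  obtain ⟨d, rfl⟩ := Ideal.mem_span_singleton'.1 hc
  rw [← ZMod.natCast_eq_zero_iff_even, ← augmentation_eq_wt] at hf ⊢
  rw [map_mul, hf, mul_zero]

end Bits

section BallotSearch

variable {m t : ℕ}

/-- Bit `n` of a bit vector, as a number.

This and the following functions are evaluated by the kernel on a large number of words, so they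
are written with `Nat` and `BitVec` operations rather than with notation, whose instances the
kernel would unfold at every step. -/
def bitAt (w : BitVec m) (n : ℕ) : ℕ := (w.toNat.shiftRight n).mod 2

theorem bitAt_eq_toNat (w : BitVec m) (n : ℕ) : bitAt w n = (w.getLsbD n).toNat := by
  rw [BitVec.getLsbD, Nat.toNat_testBit, ← Nat.shiftRight_eq_div_pow]
  rfl

/-- `popCount w n` is the number of ones among the lowest `n` bits of `w`. -/
def popCount (w : BitVec m) : ℕ → ℕ
  | 0 => 0
  | n + 1 => (popCount w n).add (bitAt w n)

theorem popCount_eq_count {w : BitVec m} {p : ℕ → Prop} [DecidablePred p] {n : ℕ}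
    (h : ∀ i < n, w.getLsbD i = decide (p i)) : popCount w n = Nat.count p n := by
  induction n with
  | zero => rfl
  | succ n ih =>
    change popCount w n + bitAt w n = _
    rw [Nat.count_succ, ih fun i hi => h i (hi.trans n.lt_succ_self), bitAt_eq_toNat,
      h n n.lt_succ_self, Bool.toNat, Bool.cond_decide]

theorem popCount_congr {w x : BitVec m} {n : ℕ} (h : ∀ i < n, w.getLsbD i = x.getLsbD i) :
    popCount w n = popCount x n :=
  (popCount_eq_count (p := (x.getLsbD · = true)) (by simpa using h)).trans
    (popCount_eq_count (by simp)).symm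

/-- No initial segment of `w` has a larger proportion of ones than `t / m`. -/
def IsBallot (t : ℕ) (w : BitVec m) : Prop :=
  ∀ n ≤ m, m * popCount w n ≤ n * t

/-- Continue with `K` at the next bit of `w` unless the ballot inequality fails there; `s` is the
number of ones among the lowest `n` bits, and a dead branch counts as success. -/
def ballotStep (t : ℕ) (w : BitVec m) (n s : ℕ) (K : ℕ → Bool) : Bool :=
  bif (bitAt w n).beq 0 then K s else (n.succ.mul t).blt (m.mul s.succ) || K s.succ

theorem of_ballotStep {w : BitVec m} {n : ℕ} {K : ℕ → Bool}
    (hw : m * popCount w (n + 1) ≤ (n + 1) * t) (h : ballotStep t w n (popCount w n) K = true) :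
    K (popCount w (n + 1)) = true := by
  have hcount : popCount w (n + 1) = popCount w n + bitAt w n := rfl
  rcases hbit : w.getLsbD n
  · simpa [hcount, ballotStep, bitAt_eq_toNat, hbit] using h
  · simp only [hcount, bitAt_eq_toNat, hbit, Bool.toNat_true] at hw ⊢
    simpa [ballotStep, bitAt_eq_toNat, hbit, hw.not_gt] using h

/-- Test `P` on `w` unless one of the bits `n, …, n + k - 1` violates the ballot inequality. -/
def ballotCheck (t : ℕ) (P : BitVec m → Bool) : ℕ → ℕ → BitVec m → ℕ → Bool
  | 0, _, w, _ => P w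
  | k + 1, n, w, s => ballotStep t w n s (ballotCheck t P k n.succ w)

theorem of_ballotCheck {P : BitVec m → Bool} {w : BitVec m} (hw : IsBallot t w) {k n : ℕ}
    (hm : n + k ≤ m) (h : ballotCheck t P k n w (popCount w n) = true) : P w = true := by
  induction k generalizing n with
  | zero => exact h
  | succ k ih => exact ih (by lia) (of_ballotStep (hw (n + 1) (by lia)) h)

/-- Fix the next `k` bits of a codeword in all ways allowed by the ballot inequality, by adding or
not adding the shift of the generator `f` that starts at the current bit, and test `P` on the
resulting words. -/
def ballotSearch (t : ℕ) (f : BitVec m) (P : ℕ → BitVec m → ℕ → Bool) : ℕ → ℕ → BitVec m → ℕ → Bool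
  | 0, n, w, s => P n w s
  | k + 1, n, w, s =>
    let v := w.xor (f.rotateLeft n)
    ballotStep t w n s (ballotSearch t f P k n.succ w) &&
      ballotStep t v n s (ballotSearch t f P k n.succ v)

theorem of_ballotSearch {f : BitVec m} {P : ℕ → BitVec m → ℕ → Bool} {N : ℕ} {C : Set (BitVec m)}
    (hm : N ≤ m) (hf : ∀ n < N, ∀ i ≤ n, (f.rotateLeft n).getLsbD i = decide (i = n))
    (hC : ∀ n, ∀ w ∈ C, w ^^^ f.rotateLeft n ∈ C)
    (hdet : ∀ w ∈ C, ∀ x ∈ C, (∀ i < N, w.getLsbD i = x.getLsbD i) → w = x)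
    {x : BitVec m} (hx : x ∈ C) (hxt : IsBallot t x) {k n : ℕ} (hn : n + k = N) {w : BitVec m}
    (hw : w ∈ C) (hwx : ∀ i < n, w.getLsbD i = x.getLsbD i)
    (h : ballotSearch t f P k n w (popCount w n) = true) : P N x (popCount x N) = true := by
  induction k generalizing n w with
  | zero =>
    obtain rfl : n = N := hn
    obtain rfl := hdet w hw x hx hwx
    exact h
  | succ k ih =>
    have next {v : BitVec m} (hv : v ∈ C) (hvx : ∀ i < n + 1, v.getLsbD i = x.getLsbD i)
        (hstep : ballotStep t v n (popCount v n) (ballotSearch t f P k (n + 1) v) = true) :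
        P N x (popCount x N) = true := by
      refine ih (by lia) hv hvx (of_ballotStep ?_ hstep)
      rw [popCount_congr hvx]
      exact hxt (n + 1) (by lia)
    obtain ⟨hstep, hstep'⟩ := (Bool.and_eq_true ..).mp h
    by_cases hbit : w.getLsbD n = x.getLsbD n
    · exact next hw (Nat.forall_lt_succ_right.2 ⟨hwx, hbit⟩) hstep
    · have agree : ∀ i < n, (w ^^^ f.rotateLeft n).getLsbD i = w.getLsbD i := fun i hi => by
        rw [BitVec.getLsbD_xor, hf n (by lia) i hi.le, decide_eq_false hi.ne, Bool.xor_false]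
      have flip : (w ^^^ f.rotateLeft n).getLsbD n = x.getLsbD n := by
        rw [BitVec.getLsbD_xor, hf n (by lia) n le_rfl, decide_eq_true rfl, Bool.xor_true]
        exact Bool.not_eq.2 hbit
      refine next (hC n w hw) (Nat.forall_lt_succ_right.2 ⟨fun i hi => ?_, flip⟩) ?_
      · rw [agree i hi, hwx i hi]
      · rwa [popCount_congr agree]

variable [NeZero m]

theorem wt_eq_popCount (c : Rng (ZMod 2) m) : wt (NeZero.ne m) c = popCount (bits c) m := by
  rw [wt_eq_count, popCount_eq_count fun i hi => getLsbD_bits c hi]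

theorem isBallot_bits {c : Rng (ZMod 2) m} (hc : wt (NeZero.ne m) c ≤ t)
    (h : ∀ n, m * Nat.count (fun i => cyclicCoeff i c ≠ 0) n ≤ n * wt (NeZero.ne m) c) :
    IsBallot t (bits c) := fun n hn => by
  rw [popCount_eq_count fun i hi => getLsbD_bits c (hi.trans_le hn)]
  exact (h n).trans (Nat.mul_le_mul_left n hc)

end BallotSearch

section ShearCode

variable {F R : Type*} [Field F] [CommRing R] [Algebra F R]

/-- The parametrization `(c₁, c₂) ↦ (c₁, c₁ g + c₂)` of the code built from ideals `I` and `J`. -/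
noncomputable def shearMap (F : Type*) {R : Type*} [Field F] [CommRing R] [Algebra F R]
    (I J : Ideal R) (g : R) : I.restrictScalars F × J.restrictScalars F →ₗ[F] R × R :=
  ((LinearEquiv.refl F R).skewProd (LinearEquiv.refl F R) (LinearMap.mulRight F g)).toLinearMap ∘ₗ
    (I.restrictScalars F).subtype.prodMap (J.restrictScalars F).subtype

theorem shearMap_injective (I J : Ideal R) (g : R) : Function.Injective (shearMap F I J g) := by
  rw [shearMap, LinearMap.coe_comp, LinearMap.coe_prodMap]
  exact (LinearEquiv.injective _).comp (Subtype.val_injective.prodMap Subtype.val_injective)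

theorem coe_range_shearMap (I J : Ideal R) (g : R) :
    (LinearMap.range (shearMap F I J g) : Set (R × R)) =
      {v | ∃ c₁ ∈ I, ∃ c₂ ∈ J, v = (c₁, c₁ * g + c₂)} := by
  ext v
  simp [shearMap, eq_comm, add_comm]

theorem finrank_range_shearMap [Module.Finite F R] (I J : Ideal R) (g : R) :
    Module.finrank F (LinearMap.range (shearMap F I J g)) =
      Module.finrank F I + Module.finrank F J := by
  rw [LinearMap.finrank_range_of_inj (shearMap_injective I J g), Module.finrank_prod]
  rfl

end ShearCode

section QuasiCyclicCode

/-- The exponents of `f₁`. -/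
def f₁Exps : List ℕ := [25, 23, 22, 21, 20, 18, 16, 11, 10, 8, 7, 6, 5, 4, 1, 0]

/-- The exponents of `q = (x^51 - 1) / (f₁ (x^2 + x + 1))`, so that `f₂ = f₁ q`. -/
def qExps : List ℕ := [24, 23, 22, 21, 15, 14, 11, 10, 9, 7, 4, 3, 0]

/-- The exponents of `g`. -/
def gExps : List ℕ := [20, 15, 14, 10, 9, 7, 0]

/-- The exponents of an inverse `g⁻¹` of `g` modulo `q`. -/
def gInvExps : List ℕ := [23, 14, 13, 12, 11, 10, 9, 8, 6, 4, 1, 0]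

/-- The exponents of the quotient of `g g⁻¹ - 1` by `q`. -/
def gInvQuotExps : List ℕ := [19, 18, 15, 12, 11, 7, 6, 5, 1]

theorem f₁_eq_mk : f₁ = AdjoinRoot.mk _ (xPowSum f₁Exps) :=
  congrArg _ <| by simp [xPowSum, f₁Exps, add_assoc]

theorem g_eq_mk : g = AdjoinRoot.mk _ (xPowSum gExps) :=
  congrArg _ <| by simp [xPowSum, gExps, add_assoc]

/-- The check polynomial `(x^51 - 1) / f₁` of the cyclic code `(f₁)`. -/
noncomputable def f₁Check : (ZMod 2)[X] := xPowSum qExps * (X ^ 2 + X + 1)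

theorem X_pow_sub_one_eq_mul_X_sq_add_X_add_one :
    (X ^ 51 - 1 : (ZMod 2)[X]) = xPowSum f₁Exps * xPowSum qExps * (X ^ 2 + X + 1) := by
  simp only [xPowSum, f₁Exps, qExps, List.map_cons, List.map_nil, List.sum_cons, List.sum_nil]
  ring_nf
  reduce_mod_char

theorem X_pow_sub_one_eq_mul_f₁Check : (X ^ 51 - 1 : (ZMod 2)[X]) = xPowSum f₁Exps * f₁Check := by
  rw [X_pow_sub_one_eq_mul_X_sq_add_X_add_one, mul_assoc, f₁Check]

theorem xPowSum_gExps_mul_gInvExps :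
    xPowSum gExps * xPowSum gInvExps = 1 + xPowSum qExps * xPowSum gInvQuotExps := by
  simp only [xPowSum, gExps, gInvExps, qExps, gInvQuotExps, List.map_cons, List.map_nil,
    List.sum_cons, List.sum_nil]
  ring_nf
  reduce_mod_char

theorem monic_X_sq_add_X_add_one : (X ^ 2 + X + 1 : (ZMod 2)[X]).Monic := by
  monicity!

theorem natDegree_X_sq_add_X_add_one : (X ^ 2 + X + 1 : (ZMod 2)[X]).natDegree = 2 := by
  compute_degree!

theorem monic_xPowSum_f₁Exps : (xPowSum f₁Exps).Monic := monic_xPowSum_cons (by decide)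

theorem monic_xPowSum_qExps : (xPowSum qExps).Monic := monic_xPowSum_cons (by decide)

theorem f₁Check_ne_zero : f₁Check ≠ 0 := (monic_xPowSum_qExps.mul monic_X_sq_add_X_add_one).ne_zero

theorem natDegree_f₁Check : f₁Check.natDegree = 26 := by
  rw [f₁Check, monic_xPowSum_qExps.natDegree_mul monic_X_sq_add_X_add_one,
    natDegree_X_sq_add_X_add_one, qExps, natDegree_xPowSum_cons (by decide)]

theorem f₂_eq_mk : f₂ = AdjoinRoot.mk _ (xPowSum f₁Exps * xPowSum qExps) := by
  refine congrArg (AdjoinRoot.mk _) ?_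
  rw [X_pow_sub_one_eq_mul_X_sq_add_X_add_one, mul_comm,
    mul_divByMonic_cancel_left _ monic_X_sq_add_X_add_one]

/-- The coefficient vector of `f₁`. -/
def f₁Word : BitVec 51 := xorRotations f₁Exps (BitVec.ofNat 51 1)

/-- The coefficient vector of `f₂`. -/
def f₂Word : BitVec 51 := xorRotations qExps f₁Word

/-- The coefficient vectors of the elements of `(f₂)`. -/
def f₂Words : List (BitVec 51) :=
  [0, f₂Word, f₂Word.rotateLeft 1, f₂Word.rotateLeft 1 ^^^ f₂Word]

theorem bits_f₁ : bits f₁ = f₁Word := by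
  rw [f₁_eq_mk, ← mul_one (AdjoinRoot.mk _ _), bits_mk_xPowSum_mul, bits_one, f₁Word]

theorem f₂_eq_mk_mul_f₁ : f₂ = AdjoinRoot.mk _ (xPowSum qExps) * f₁ := by
  rw [f₂_eq_mk, f₁_eq_mk, map_mul, mul_comm]

theorem bits_f₂ : bits f₂ = f₂Word := by
  rw [f₂_eq_mk_mul_f₁, bits_mk_xPowSum_mul, bits_f₁, f₂Word]

theorem span_f₂_le_span_f₁ : Ideal.span {f₂} ≤ Ideal.span {f₁} :=
  Ideal.span_singleton_le_span_singleton.2 ⟨_, f₂_eq_mk_mul_f₁.trans (mul_comm _ _)⟩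

theorem bits_mem_f₂Words {d : Rng (ZMod 2) 51} (hd : d ∈ Ideal.span {f₂}) :
    bits d ∈ f₂Words := by
  rw [f₂_eq_mk] at hd
  obtain ⟨u, hu, rfl⟩ := exists_mk_mul_eq_of_mem_span X_pow_sub_one_eq_mul_X_sq_add_X_add_one
    monic_X_sq_add_X_add_one.ne_zero hd
  have hu₁ : u.natDegree ≤ 1 := by
    rw [degree_eq_natDegree monic_X_sq_add_X_add_one.ne_zero, natDegree_X_sq_add_X_add_one] at hu
    exact natDegree_le_of_degree_le (Order.le_of_lt_succ hu)
  have hrot : bits (xBar (ZMod 2) 51 * f₂) = f₂Word.rotateLeft 1 := by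
    rw [← pow_one (xBar (ZMod 2) 51), bits_xBar_pow_mul, bits_f₂]
  have eq_zero_or_one (a : ZMod 2) : a = 0 ∨ a = 1 := by decide +revert
  obtain ⟨a, b, rfl⟩ := exists_eq_X_add_C_of_natDegree_le_one hu₁
  rw [map_mul, ← f₂_eq_mk]
  obtain rfl | rfl := eq_zero_or_one a <;> obtain rfl | rfl := eq_zero_or_one b <;>
    simp [f₂Words, add_mul, bits_add, bits_zero, hrot, bits_f₂]

theorem finrank_span_f₁ : Module.finrank (ZMod 2) (Ideal.span {f₁}) = 26 := by
  rw [f₁_eq_mk, finrank_span_mk X_pow_sub_one_eq_mul_f₁Check monic_xPowSum_f₁Exps.ne_zero,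
    natDegree_f₁Check]

theorem finrank_span_f₂ : Module.finrank (ZMod 2) (Ideal.span {f₂}) = 2 := by
  rw [f₂_eq_mk, finrank_span_mk X_pow_sub_one_eq_mul_X_sq_add_X_add_one
    (monic_xPowSum_f₁Exps.mul monic_xPowSum_qExps).ne_zero, natDegree_X_sq_add_X_add_one]

theorem mul_mk_f₁Check_eq_zero {c : Rng (ZMod 2) 51} (hc : c ∈ Ideal.span {f₁}) :
    c * AdjoinRoot.mk _ f₁Check = 0 := by
  obtain ⟨a, rfl⟩ := Ideal.mem_span_singleton'.1 hc
  rw [mul_assoc, f₁_eq_mk, ← map_mul, ← X_pow_sub_one_eq_mul_f₁Check, AdjoinRoot.mk_self, mul_zero]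

theorem eq_of_getLsbD_bits_eq {c d : Rng (ZMod 2) 51} (hc : c ∈ Ideal.span {f₁})
    (hd : d ∈ Ideal.span {f₁}) (h : ∀ n < 26, (bits c).getLsbD n = (bits d).getLsbD n) : c = d := by
  refine sub_eq_zero.1 (eq_zero_of_mul_mk_eq_zero f₁Check_ne_zero
    (by rw [natDegree_f₁Check]; norm_num) (mul_mk_f₁Check_eq_zero (sub_mem hc hd)) fun n hn => ?_)
  rw [natDegree_f₁Check] at hn
  rw [map_sub, (getLsbD_bits_eq_iff (by lia)).1 (h n hn), sub_self]

theorem mul_g_mul_gInv_sub_self_mem {c : Rng (ZMod 2) 51} (hc : c ∈ Ideal.span {f₁}) :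
    c * g * AdjoinRoot.mk _ (xPowSum gInvExps) - c ∈ Ideal.span {f₂} := by
  obtain ⟨a, rfl⟩ := Ideal.mem_span_singleton'.1 hc
  have hinv := congrArg (AdjoinRoot.mk (X ^ 51 - 1)) xPowSum_gExps_mul_gInvExps
  rw [map_mul, ← g_eq_mk, map_add, map_one, map_mul] at hinv
  refine Ideal.mem_span_singleton'.2 ⟨a * AdjoinRoot.mk _ (xPowSum gInvQuotExps), ?_⟩
  rw [f₂_eq_mk_mul_f₁]
  linear_combination -a * f₁ * hinv

/-- Given the coefficient vector `w` of `c`, check that `(c, c γ + d)` is zero or has weight at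
least 28 for all `d ∈ (f₂)`, where `γ = xPowSum es`. -/
def cosetCheck (es : List ℕ) (w : BitVec 51) : Bool :=
  f₂Words.all fun d =>
    let y := (xorRotations es w).xor d
    (w.toNat.beq 0 && y.toNat.beq 0) || Nat.ble 28 ((popCount w 51).add (popCount y 51))

theorem le_wt_add_wt_of_cosetCheck {es : List ℕ} {c d : Rng (ZMod 2) 51}
    (h : cosetCheck es (bits c) = true) (hd : d ∈ Ideal.span {f₂})
    (hcd : ¬(c = 0 ∧ c * AdjoinRoot.mk _ (xPowSum es) + d = 0)) :
    28 ≤ wt (NeZero.ne 51) c + wt (NeZero.ne 51) (c * AdjoinRoot.mk _ (xPowSum es) + d) := by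
  have hword := List.all_eq_true.1 h (bits d) (bits_mem_f₂Words hd)
  have hbits : (xorRotations es (bits c)).xor (bits d) =
      bits (c * AdjoinRoot.mk _ (xPowSum es) + d) := by
    rw [bits_add, mul_comm c, bits_mk_xPowSum_mul]
    rfl
  have toNat_beq_zero (e : Rng (ZMod 2) 51) : (bits e).toNat.beq 0 = true ↔ e = 0 := by
    rw [Nat.beq_eq, ← bits_eq_zero_iff, ← BitVec.toNat_inj]
    rfl
  simp only [hbits, Bool.or_eq_true, Bool.and_eq_true, toNat_beq_zero, Nat.ble_eq] at hword
  rw [wt_eq_popCount, wt_eq_popCount]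
  exact hword.resolve_left hcd

set_option maxRecDepth 100000 in
theorem ballotSearch_cosetCheck :
    ballotSearch 12 f₁Word
      (ballotCheck 12 (fun w => [gExps, gInvExps].all (cosetCheck · w)) 25) 26 0 0 0 = true := by
  decide +kernel

theorem even_wt_f₁ : Even (wt (NeZero.ne 51) f₁) := by
  rw [wt_eq_popCount, bits_f₁]
  decide

theorem cosetCheck_of_isBallot {c : Rng (ZMod 2) 51} (hc : c ∈ Ideal.span {f₁})
    (hballot : IsBallot 12 (bits c)) : ∀ es ∈ [gExps, gInvExps], cosetCheck es (bits c) = true := by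
  have low_bit : ∀ n < 26, ∀ i ≤ n, (f₁Word.rotateLeft n).getLsbD i = decide (i = n) := by
    decide +kernel
  let C : Set (BitVec 51) := bits '' Ideal.span {f₁}
  have closed (n : ℕ) : ∀ w ∈ C, w ^^^ f₁Word.rotateLeft n ∈ C := by
    rintro _ ⟨a, ha, rfl⟩
    refine ⟨a + xBar (ZMod 2) 51 ^ n * f₁, ?_, ?_⟩
    · exact add_mem ha (Ideal.mul_mem_left _ _ (Ideal.mem_span_singleton_self f₁))
    · rw [bits_add, bits_xBar_pow_mul, bits_f₁]
  have determined : ∀ w ∈ C, ∀ x ∈ C, (∀ i < 26, w.getLsbD i = x.getLsbD i) → w = x := by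
    rintro _ ⟨a, ha, rfl⟩ _ ⟨b, hb, rfl⟩ hab
    rw [eq_of_getLsbD_bits_eq ha hb hab]
  exact List.all_eq_true.1 <|
    of_ballotCheck (k := 25) (n := 26) hballot (by norm_num) <|
    of_ballotSearch (by norm_num) low_bit closed determined (Set.mem_image_of_mem _ hc) hballot
      (zero_add 26) (w := 0) ⟨0, zero_mem _, bits_zero⟩ (by simp) ballotSearch_cosetCheck

theorem le_wt_add_wt_of_wt_le {es : List ℕ} (hes : es ∈ [gExps, gInvExps])
    {c d : Rng (ZMod 2) 51} (hc : c ∈ Ideal.span {f₁}) (hd : d ∈ Ideal.span {f₂})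
    (hwt : wt (NeZero.ne 51) c ≤ 12) (hcd : ¬(c = 0 ∧ c * AdjoinRoot.mk _ (xPowSum es) + d = 0)) :
    28 ≤ wt (NeZero.ne 51) c + wt (NeZero.ne 51) (c * AdjoinRoot.mk _ (xPowSum es) + d) := by
  obtain ⟨k, hk⟩ := exists_ballot_shift c
  have hunit : IsUnit (xBar (ZMod 2) 51 ^ k) :=
    (IsUnit.of_pow_eq_one xBar_pow_self (by norm_num)).pow k
  rw [← wt_xBar_pow_mul c k] at hwt hk ⊢
  rw [← wt_xBar_pow_mul (c * _ + d) k, mul_add, ← mul_assoc]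
  refine le_wt_add_wt_of_cosetCheck
    (cosetCheck_of_isBallot (Ideal.mul_mem_left _ _ hc) (isBallot_bits hwt hk) es hes)
    (Ideal.mul_mem_left _ _ hd) ?_
  rwa [mul_assoc, ← mul_add, hunit.mul_right_eq_zero, hunit.mul_right_eq_zero]

theorem le_wt_add_wt {c₁ c₂ : Rng (ZMod 2) 51} (h₁ : c₁ ∈ Ideal.span {f₁})
    (h₂ : c₂ ∈ Ideal.span {f₂}) (h : ¬(c₁ = 0 ∧ c₁ * g + c₂ = 0)) :
    28 ≤ wt (NeZero.ne 51) c₁ + wt (NeZero.ne 51) (c₁ * g + c₂) := by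
  have he : c₁ * g + c₂ ∈ Ideal.span {f₁} :=
    add_mem (Ideal.mul_mem_right _ _ h₁) (span_f₂_le_span_f₁ h₂)
  rcases le_or_gt (wt (NeZero.ne 51) c₁) 12 with hle₁ | hlt₁
  · rw [g_eq_mk] at h ⊢
    exact le_wt_add_wt_of_wt_le (by simp) h₁ h₂ hle₁ h
  rcases le_or_gt (wt (NeZero.ne 51) (c₁ * g + c₂)) 12 with hle₂ | hlt₂
  · let gInv : Rng (ZMod 2) 51 := AdjoinRoot.mk _ (xPowSum gInvExps)
    obtain ⟨d, hd, hc₁⟩ : ∃ d ∈ Ideal.span {f₂}, c₁ = (c₁ * g + c₂) * gInv + d :=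
      ⟨-(c₁ * g * gInv - c₁) - c₂ * gInv, sub_mem (neg_mem (mul_g_mul_gInv_sub_self_mem h₁))
        (Ideal.mul_mem_right _ _ h₂), by ring⟩
    have hswap := le_wt_add_wt_of_wt_le (es := gInvExps) (by simp) he hd hle₂
    rw [← hc₁] at hswap
    rw [add_comm]
    exact hswap fun h' => h h'.symm
  · obtain ⟨a, ha⟩ := even_wt_of_mem_span even_wt_f₁ h₁
    obtain ⟨b, hb⟩ := even_wt_of_mem_span even_wt_f₁ he
    lia

end QuasiCyclicCode

/-- the code `𝒞₂ = {(c₁, c₁·g + c₂) : c₁ ∈ (f₁), c₂ ∈ (f₂)}` in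
`R² ≅ 𝔽₂¹⁰²` (with `R = 𝔽₂[x]/(x⁵¹-1)`) is an `𝔽₂`-linear code of length 102 and
dimension 28, and every nonzero codeword has Hamming weight at least 28. -/
theorem stmt7 :
    ∃ W : Submodule (ZMod 2) (Rng (ZMod 2) 51 × Rng (ZMod 2) 51),
      (W : Set (Rng (ZMod 2) 51 × Rng (ZMod 2) 51)) =
        {v | ∃ c₁ ∈ Ideal.span {f₁}, ∃ c₂ ∈ Ideal.span {f₂}, v = (c₁, c₁ * g + c₂)} ∧
      Module.finrank (ZMod 2) W = 28 ∧
      ∀ c₁ ∈ Ideal.span {f₁}, ∀ c₂ ∈ Ideal.span {f₂},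
        ((c₁, c₁ * g + c₂) : Rng (ZMod 2) 51 × Rng (ZMod 2) 51) ≠ 0 →
        28 ≤ wt (by norm_num) c₁ + wt (by norm_num) (c₁ * g + c₂) := by
  refine ⟨LinearMap.range (shearMap (ZMod 2) (Ideal.span {f₁}) (Ideal.span {f₂}) g),
    coe_range_shearMap _ _ _, ?_, fun c₁ h₁ c₂ h₂ h => ?_⟩
  · have := (monicXm (F := ZMod 2) (NeZero.ne 51)).finite_adjoinRoot
    rw [finrank_range_shearMap, finrank_span_f₁, finrank_span_f₂]
  · exact le_wt_add_wt h₁ h₂ fun h' => h (Prod.mk_eq_zero.2 h')
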